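/- arXiv:2512.16486 — 2 statements merged into one kernel-verified Lean document; each statement's English description precedes it below -/
import Mathlib

section
/- Classical comparison inequalities. Let (V, E, ends, α) be a finite graph with boundary condition, p ∈ (0,1) and q > 0. Then P_{min(p,p')} ≼ φ^α_{G,p,q} ≼ P_{max(p,p')}, where p' = p/(p+q(1−p)). -/
open scoped Classical

noncomputable section

namespace FKPaper

variable {V E : Type*}

/-- One-step adjacency between wired vertices through an edge in `F`. -/
def Step (ends : E → Sym2 V) (α : Setoid V) (F : Set E) (x y : Quotient α) : Prop :=
  ∃ e ∈ F, Sym2.map (Quotient.mk α) (ends e) = s(x, y)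

/-- Setoid of connected components of the wired multigraph with edge set `F`. -/
def connSetoid (ends : E → Sym2 V) (α : Setoid V) (F : Set E) : Setoid (Quotient α) :=
  Relation.EqvGen.setoid (Step ends α F)

/-- Connectivity in the wired multigraph with edge set `F`. -/
def Conn (ends : E → Sym2 V) (α : Setoid V) (F : Set E) (x y : Quotient α) : Prop :=
  (connSetoid ends α F).r x y

/-- The two endpoints of `e` are joined in the wired multigraph with edge set `F`. -/
def EndsConn (ends : E → Sym2 V) (α : Setoid V) (F : Set E) (e : E) : Prop :=
  ∀ x y : V, ends e = s(x, y) → Conn ends α F (Quotient.mk α x) (Quotient.mk α y)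

/-- Number of connected components `k(ω, α)`. -/
def numComponents (ends : E → Sym2 V) (α : Setoid V) (ω : E → Bool) : ℕ :=
  Nat.card (Quotient (connSetoid ends α {e | ω e = true}))

/-- `p' = p / (p + q (1 - p))`. -/
def pPrime (p q : ℝ) : ℝ := p / (p + q * (1 - p))

/-- Total mass of a set under a weight function. -/
def massOf {ι : Type*} [Fintype ι] (w : ι → ℝ) (A : Set ι) : ℝ :=
  ∑ x ∈ Finset.univ.filter (· ∈ A), w x

/-- Normalized probability of a set under a weight function. -/
def probOf {ι : Type*} [Fintype ι] (w : ι → ℝ) (A : Set ι) : ℝ :=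
  massOf w A / massOf w Set.univ

/-- FK weight of a configuration. -/
def fkWeight [Fintype E] (ends : E → Sym2 V) (α : Setoid V) (p q : ℝ) (ω : E → Bool) : ℝ :=
  p ^ (Finset.univ.filter fun e => ω e = true).card *
    (1 - p) ^ (Finset.univ.filter fun e => ω e = false).card *
    q ^ numComponents ends α ω

/-- The FK (random cluster) probability measure `φ^α_{G,p,q}`. -/
def fkProb [Fintype E] (ends : E → Sym2 V) (α : Setoid V) (p q : ℝ)
    (A : Set (E → Bool)) : ℝ :=
  probOf (fkWeight ends α p q) A

/-- Inhomogeneous Bernoulli weight. -/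
def berWeight [Fintype E] (pe : E → ℝ) (ω : E → Bool) : ℝ :=
  ∏ e, if ω e = true then pe e else 1 - pe e

/-- Inhomogeneous Bernoulli product measure `P_{(p_e)}`. -/
def berProb [Fintype E] (pe : E → ℝ) (A : Set (E → Bool)) : ℝ :=
  probOf (berWeight pe) A

/-- Increasing sets of configurations. -/
def Increasing (A : Set (E → Bool)) : Prop :=
  ∀ ⦃ω ω' : E → Bool⦄, ω ∈ A → (∀ e, ω e ≤ ω' e) → ω' ∈ A

/-- Stochastic domination `μ ≼ ν`. -/
def StochDom [Fintype E] (μ ν : Set (E → Bool) → ℝ) : Prop :=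
  ∀ A : Set (E → Bool), Increasing A → μ A ≤ ν A

/-- `Q_F(e)`: cutsets for `e` included in `F`. -/
def Cutsets (ends : E → Sym2 V) (α : Setoid V) (F : Set E) (e : E) : Set (Set E) :=
  {χ | χ ⊆ F ∧ ¬ EndsConn ends α {e' | e' ∉ χ ∧ e' ≠ e} e}

/-!
By Holley's inequality, `μ ≼ ν` holds for positive weights as soon as each edge is conditionally
less likely to be open under `μ` than under `ν`, given the states of all other edges. For a product
measure this conditional probability is `p_e`. For the FK measure, opening `e` either preserves the
number of components, and the conditional probability is `p`, or merges two of them, and it is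
`p' = p / (p + q (1 - p))`.
-/

open Function

/-! ### Holley's criterion for stochastic domination -/

theorem massOf_univ {ι : Type*} [Fintype ι] (w : ι → ℝ) : massOf w Set.univ = ∑ x, w x := by
  simp [massOf]

theorem massOf_univ_pos {ι : Type*} [Fintype ι] [Nonempty ι] {w : ι → ℝ} (hw : ∀ x, 0 < w x) :
    0 < massOf w Set.univ := by
  rw [massOf_univ]
  exact Finset.sum_pos (fun x _ => hw x) Finset.univ_nonempty

theorem probOf_eq_sum_indicator {ι : Type*} [Fintype ι] (w : ι → ℝ) (A : Set ι) :
    probOf w A = ∑ x, A.indicator 1 x * (w x / massOf w Set.univ) := by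
  simp only [probOf, massOf, Finset.sum_div, Finset.sum_filter, ite_div, zero_div,
    Set.indicator_apply, Pi.one_apply, ite_mul, one_mul, zero_mul]

theorem monotone_indicator_one {ι : Type*} [Preorder ι] {A : Set ι} (hA : IsUpperSet A) :
    Monotone (A.indicator (1 : ι → ℝ)) := fun a b hab => by
  by_cases ha : a ∈ A
  · simp [ha, hA hab ha]
  · rw [Set.indicator_of_notMem ha]
    exact Set.indicator_nonneg (fun _ _ => zero_le_one) b

theorem probOf_le_probOf_of_isUpperSet {ι : Type*} [Fintype ι] [DistribLattice ι] {f g : ι → ℝ}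
    (hf : 0 ≤ f) (hg : 0 ≤ g) (hf' : 0 < massOf f Set.univ) (hg' : 0 < massOf g Set.univ)
    (h : ∀ a b, f a * g b ≤ f (a ⊓ b) * g (a ⊔ b)) {A : Set ι} (hA : IsUpperSet A) :
    probOf f A ≤ probOf g A := by
  have hsum : ∑ a, f a / massOf f Set.univ = ∑ a, g a / massOf g Set.univ := by
    rw [← Finset.sum_div, ← Finset.sum_div, ← massOf_univ, ← massOf_univ, div_self hf'.ne',
      div_self hg'.ne']
  simp only [probOf_eq_sum_indicator]
  refine holley _ _ _ (fun a => Set.indicator_nonneg (fun _ _ => zero_le_one) a)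
    (fun a => div_nonneg (hf a) hf'.le) (fun a => div_nonneg (hg a) hg'.le)
    (monotone_indicator_one hA) hsum fun a b => ?_
  rw [div_mul_div_comm, div_mul_div_comm]
  exact div_le_div_of_nonneg_right (h a b) (mul_pos hf' hg').le

/-- The conditional probability that `e` is open given the states of all other edges in `ω`, under
the measure on configurations with weight `w`. The state of `e` in `ω` is ignored. -/
def openProb (w : (E → Bool) → ℝ) (ω : E → Bool) (e : E) : ℝ :=
  w (update ω e true) / (w (update ω e false) + w (update ω e true))

theorem openProb_le_openProb_iff {f g : (E → Bool) → ℝ} (hf : ∀ ω, 0 < f ω) (hg : ∀ ω, 0 < g ω)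
    {ω η : E → Bool} {e : E} :
    openProb f ω e ≤ openProb g η e ↔
      f (update ω e true) * g (update η e false) ≤ f (update ω e false) * g (update η e true) := by
  rw [openProb, openProb, div_le_div_iff₀ (add_pos (hf _) (hf _)) (add_pos (hg _) (hg _)), mul_add,
    mul_add, mul_comm (g _) (f _), mul_comm (g _) (f _), add_le_add_iff_right]

theorem mul_le_mul_piecewise_true_of_update {f g : (E → Bool) → ℝ} (hg : ∀ ω, 0 < g ω)
    (h : ∀ ω η e, ω ≤ η →
      f (update ω e true) * g (update η e false) ≤ f (update ω e false) * g (update η e true))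
    {ω η : E → Bool} (hωη : ω ≤ η) (D : Finset E) (hD : ∀ e ∈ D, η e = false) :
    f (D.piecewise (fun _ => true) ω) * g η ≤ f ω * g (D.piecewise (fun _ => true) η) := by
  induction D using Finset.induction_on with
  | empty => simp
  | insert e D he ih =>
    set ω' := D.piecewise (fun _ => true) ω with hω'
    set η' := D.piecewise (fun _ => true) η with hη'
    have hηe : η e = false := hD e (Finset.mem_insert_self e D)
    have hωe : ω e = false := le_bot_iff.1 ((hωη e).trans_eq hηe)
    have hω'e : update ω' e false = ω' := by simp [hω', he, hωe]
    have hη'e : update η' e false = η' := by simp [hη', he, hηe]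
    have hstep := h ω' η' e (Finset.piecewise_le_piecewise D le_rfl hωη)
    rw [hω'e, hη'e] at hstep
    have hD' := ih fun e' he' => hD e' (Finset.mem_insert_of_mem he')
    rw [Finset.piecewise_insert, Finset.piecewise_insert]
    refine le_of_mul_le_mul_right ?_ (hg η')
    calc f (update ω' e true) * g η * g η'
        = f (update ω' e true) * g η' * g η := by ring
      _ ≤ f ω' * g (update η' e true) * g η := by gcongr; exact (hg η).le
      _ = f ω' * g η * g (update η' e true) := by ring
      _ ≤ f ω * g η' * g (update η' e true) := by gcongr; exact (hg _).le
      _ = f ω * g (update η' e true) * g η' := by ring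

theorem mul_le_inf_mul_sup_of_update [Finite E] {f g : (E → Bool) → ℝ} (hg : ∀ ω, 0 < g ω)
    (h : ∀ ω η e, ω ≤ η →
      f (update ω e true) * g (update η e false) ≤ f (update ω e false) * g (update η e true))
    (a b : E → Bool) : f a * g b ≤ f (a ⊓ b) * g (a ⊔ b) := by
  have := Fintype.ofFinite E
  let D : Finset E := {e | a e = true ∧ b e = false}
  have ha : D.piecewise (fun _ => true) (a ⊓ b) = a := by
    funext e
    cases hae : a e <;> cases hbe : b e <;> simp [D, Finset.piecewise, hae, hbe]
  have hb : D.piecewise (fun _ => true) b = a ⊔ b := by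
    funext e
    cases hae : a e <;> cases hbe : b e <;> simp [D, Finset.piecewise, hae, hbe]
  have hD : ∀ e ∈ D, b e = false := fun e he => (Finset.mem_filter.1 he).2.2
  simpa only [ha, hb] using mul_le_mul_piecewise_true_of_update hg h (inf_le_right : a ⊓ b ≤ b) D hD

theorem stochDom_probOf_of_openProb_le [Fintype E] {f g : (E → Bool) → ℝ} (hf : ∀ ω, 0 < f ω)
    (hg : ∀ ω, 0 < g ω) (h : ∀ ω η e, ω ≤ η → openProb f ω e ≤ openProb g η e) :
    StochDom (probOf f) (probOf g) := fun _ hA =>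
  probOf_le_probOf_of_isUpperSet (fun ω => (hf ω).le) (fun ω => (hg ω).le) (massOf_univ_pos hf)
    (massOf_univ_pos hg)
    (mul_le_inf_mul_sup_of_update hg fun ω η e hωη =>
      (openProb_le_openProb_iff hf hg).1 (h ω η e hωη))
    fun _ _ hab ha => hA ha hab

/-! ### Effect of one edge on the number of components -/

theorem card_quotient_anti {X : Type*} {r s : Setoid X} [Finite (Quotient r)] (h : r ≤ s) :
    Nat.card (Quotient s) ≤ Nat.card (Quotient r) :=
  Nat.card_le_card_of_surjective (Setoid.map_of_le h) fun c =>
    Quotient.inductionOn' c fun a => ⟨Quotient.mk'' a, rfl⟩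

/-- The class of `a` for the setoid `r`, with the class of `x` redirected to that of `y`. The kernel
of this map is `r` with the classes of `x` and `y` merged. -/
def mergedClass {X : Type*} (r : Setoid X) (x y a : X) : Quotient r :=
  if r a x then Quotient.mk r y else Quotient.mk r a

theorem mergedClass_eq_of_rel {X : Type*} {r : Setoid X} (x y : X) {a b : X} (h : r a b) :
    mergedClass r x y a = mergedClass r x y b := by
  have hx : r a x ↔ r b x := ⟨r.trans' (r.symm' h), r.trans' h⟩
  simp only [mergedClass, hx, Quotient.sound h]

theorem mergedClass_left {X : Type*} (r : Setoid X) (x y : X) :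
    mergedClass r x y x = Quotient.mk r y :=
  if_pos (r.refl' x)

theorem mergedClass_right {X : Type*} (r : Setoid X) (x y : X) :
    mergedClass r x y y = Quotient.mk r y :=
  ite_self _

theorem card_quotient_le_add_one {X : Type*} {r s : Setoid X} [Finite (Quotient s)] {x y : X}
    (h : s ≤ Setoid.ker (mergedClass r x y)) :
    Nat.card (Quotient r) ≤ Nat.card (Quotient s) + 1 := by
  let f : Option (Quotient s) → Quotient r :=
    fun c => c.elim (Quotient.mk r x) (Quotient.lift (mergedClass r x y) fun _ _ hab => h hab)
  have hf : Surjective f := by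
    rintro ⟨a⟩
    by_cases ha : r a x
    · exact ⟨none, (Quotient.sound ha).symm⟩
    · exact ⟨some (Quotient.mk s a), if_neg ha⟩
  simpa only [Finite.card_option] using Nat.card_le_card_of_surjective f hf

section Components

variable (ends : E → Sym2 V) (α : Setoid V)

theorem connSetoid_mono : Monotone (connSetoid ends α) := fun _ _ hF =>
  Setoid.eqvGen_mono fun _ _ ⟨e, he, hxy⟩ => ⟨e, hF he, hxy⟩

theorem connSetoid_insert_le_ker_mergedClass (F : Set E) {e : E} {x y : Quotient α}
    (he : Sym2.map (Quotient.mk α) (ends e) = s(x, y)) :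
    connSetoid ends α (insert e F) ≤ Setoid.ker (mergedClass (connSetoid ends α F) x y) := by
  refine Setoid.eqvGen_le ?_
  rintro u v ⟨e', rfl | he', huv⟩
  · rcases Sym2.eq_iff.1 (he.symm.trans huv) with ⟨rfl, rfl⟩ | ⟨rfl, rfl⟩
    · exact (mergedClass_left _ _ _).trans (mergedClass_right _ _ _).symm
    · exact (mergedClass_right _ _ _).trans (mergedClass_left _ _ _).symm
  · exact mergedClass_eq_of_rel x y (Relation.EqvGen.rel _ _ ⟨e', he', huv⟩)

theorem card_connSetoid_le_insert_add_one [Finite (Quotient α)] (F : Set E) (e : E) :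
    Nat.card (Quotient (connSetoid ends α F)) ≤
      Nat.card (Quotient (connSetoid ends α (insert e F))) + 1 := by
  obtain ⟨⟨x, y⟩, hxy⟩ := Quot.exists_rep (Sym2.map (Quotient.mk α) (ends e))
  exact card_quotient_le_add_one (connSetoid_insert_le_ker_mergedClass ends α F hxy.symm)

theorem setOf_update_true (ω : E → Bool) (e : E) :
    {e' | update ω e true e' = true} = insert e {e' | update ω e false e' = true} := by
  ext e'
  obtain rfl | he := eq_or_ne e' e
  · simp
  · simp [he]

theorem numComponents_update_false_eq_or_eq_add_one [Finite (Quotient α)] (ω : E → Bool) (e : E) :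
    numComponents ends α (update ω e false) = numComponents ends α (update ω e true) ∨
      numComponents ends α (update ω e false) = numComponents ends α (update ω e true) + 1 := by
  simp only [numComponents, setOf_update_true ω e]
  set F := {e' | update ω e false e' = true}
  have hle := card_quotient_anti (connSetoid_mono ends α (Set.subset_insert e F))
  have hge := card_connSetoid_le_insert_add_one ends α F e
  omega

end Components

/-! ### Conditional opening probabilities -/

section OpenProb

variable [Fintype E]

theorem berWeight_pos {pe : E → ℝ} (h : ∀ e, pe e ∈ Set.Ioo 0 1) (ω : E → Bool) :
    0 < berWeight pe ω :=
  Finset.prod_pos fun e _ => by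
    split_ifs
    exacts [(h e).1, sub_pos.2 (h e).2]

theorem berWeight_update (pe : E → ℝ) (ω : E → Bool) (e : E) (b : Bool) :
    berWeight pe (update ω e b) =
      (if b = true then pe e else 1 - pe e) *
        ∏ e' ∈ Finset.univ \ {e}, if ω e' = true then pe e' else 1 - pe e' := by
  simp only [berWeight, apply_update (fun e' (b : Bool) => if b = true then pe e' else 1 - pe e'),
    Finset.prod_update_of_mem (Finset.mem_univ e)]

theorem one_sub_mul_berWeight_update_true (pe : E → ℝ) (ω : E → Bool) (e : E) :
    (1 - pe e) * berWeight pe (update ω e true) = pe e * berWeight pe (update ω e false) := by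
  simp only [berWeight_update, if_true, Bool.false_eq_true, if_false]
  ring

theorem openProb_berWeight {pe : E → ℝ} (h : ∀ e, pe e ∈ Set.Ioo 0 1) (ω : E → Bool) (e : E) :
    openProb (berWeight pe) ω e = pe e := by
  have hpos := add_pos (berWeight_pos h (update ω e false)) (berWeight_pos h (update ω e true))
  rw [openProb, div_eq_iff hpos.ne']
  linarith [one_sub_mul_berWeight_update_true pe ω e]

theorem pPrime_mem_Ioo {p q : ℝ} (hp : p ∈ Set.Ioo (0 : ℝ) 1) (hq : 0 < q) :
    pPrime p q ∈ Set.Ioo (0 : ℝ) 1 := by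
  have hclosed : 0 < q * (1 - p) := mul_pos hq (sub_pos.2 hp.2)
  have hden : 0 < p + q * (1 - p) := add_pos hp.1 hclosed
  exact ⟨div_pos hp.1 hden, (div_lt_one hden).2 (lt_add_of_pos_right p hclosed)⟩

variable (ends : E → Sym2 V) (α : Setoid V) {p q : ℝ}

theorem fkWeight_eq_berWeight_mul_pow (ω : E → Bool) :
    fkWeight ends α p q ω = berWeight (fun _ => p) ω * q ^ numComponents ends α ω := by
  simp [fkWeight, berWeight, Finset.prod_ite]

theorem fkWeight_pos (hp : p ∈ Set.Ioo (0 : ℝ) 1) (hq : 0 < q) (ω : E → Bool) :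
    0 < fkWeight ends α p q ω := by
  rw [fkWeight_eq_berWeight_mul_pow]
  exact mul_pos (berWeight_pos (fun _ => hp) ω) (pow_pos hq _)

theorem openProb_fkWeight_of_numComponents_eq (hp : p ∈ Set.Ioo (0 : ℝ) 1) (hq : q ≠ 0)
    {ω : E → Bool} {e : E} (h : numComponents ends α (update ω e false) =
      numComponents ends α (update ω e true)) :
    openProb (fkWeight ends α p q) ω e = p := by
  have hber : openProb (fkWeight ends α p q) ω e = openProb (berWeight fun _ => p) ω e := by
    simp only [openProb, fkWeight_eq_berWeight_mul_pow, h, ← add_mul]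
    exact mul_div_mul_right _ _ (pow_ne_zero _ hq)
  exact hber.trans (openProb_berWeight (fun _ => hp) ω e)

theorem openProb_fkWeight_of_numComponents_eq_add_one (hp : p ∈ Set.Ioo (0 : ℝ) 1) (hq : 0 < q)
    {ω : E → Bool} {e : E} (h : numComponents ends α (update ω e false) =
      numComponents ends α (update ω e true) + 1) :
    openProb (fkWeight ends α p q) ω e = pPrime p q := by
  have hden : 0 < p + q * (1 - p) := add_pos hp.1 (mul_pos hq (sub_pos.2 hp.2))
  have hpos := add_pos (fkWeight_pos ends α hp hq (update ω e false))
    (fkWeight_pos ends α hp hq (update ω e true))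
  rw [openProb, pPrime, div_eq_div_iff hpos.ne' hden.ne']
  simp only [fkWeight_eq_berWeight_mul_pow, h, pow_succ]
  linear_combination (q * q ^ numComponents ends α (update ω e true)) *
    one_sub_mul_berWeight_update_true (fun _ => p) ω e

theorem openProb_fkWeight [Finite (Quotient α)] (hp : p ∈ Set.Ioo (0 : ℝ) 1) (hq : 0 < q)
    (ω : E → Bool) (e : E) :
    openProb (fkWeight ends α p q) ω e = p ∨
      openProb (fkWeight ends α p q) ω e = pPrime p q :=
  (numComponents_update_false_eq_or_eq_add_one ends α ω e).imp
    (openProb_fkWeight_of_numComponents_eq ends α hp hq.ne')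
    (openProb_fkWeight_of_numComponents_eq_add_one ends α hp hq)

end OpenProb

theorem classical_comparison_inequalities_general [Fintype E]
    (ends : E → Sym2 V) (α : Setoid V) [Finite (Quotient α)]
    {p q : ℝ} (hp : p ∈ Set.Ioo (0 : ℝ) 1) (hq : 0 < q) :
    StochDom (berProb fun _ : E => min p (pPrime p q)) (fkProb ends α p q) ∧
    StochDom (fkProb ends α p q) (berProb fun _ : E => max p (pPrime p q)) := by
  have hp' := pPrime_mem_Ioo hp hq
  have hmin : ∀ _ : E, min p (pPrime p q) ∈ Set.Ioo (0 : ℝ) 1 :=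
    fun _ => ⟨lt_min hp.1 hp'.1, min_lt_of_left_lt hp.2⟩
  have hmax : ∀ _ : E, max p (pPrime p q) ∈ Set.Ioo (0 : ℝ) 1 :=
    fun _ => ⟨lt_max_of_lt_left hp.1, max_lt hp.2 hp'.2⟩
  have hfk := fkWeight_pos ends α hp hq
  constructor
  · refine stochDom_probOf_of_openProb_le (berWeight_pos hmin) hfk fun ω η e _ => ?_
    rw [openProb_berWeight hmin]
    rcases openProb_fkWeight ends α hp hq η e with h | h <;> rw [h]
    exacts [min_le_left _ _, min_le_right _ _]
  · refine stochDom_probOf_of_openProb_le hfk (berWeight_pos hmax) fun ω η e _ => ?_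
    rw [openProb_berWeight hmax]
    rcases openProb_fkWeight ends α hp hq ω e with h | h <;> rw [h]
    exacts [le_max_left _ _, le_max_right _ _]

/-- **Classical comparison inequalities**:
`P_{min(p,p')} ≼ φ^α_{G,p,q} ≼ P_{max(p,p')}`. -/
theorem classical_comparison_inequalities
    {V E : Type*} [Fintype V] [Fintype E]
    (ends : E → Sym2 V) (α : Setoid V)
    (p q : ℝ) (hp : p ∈ Set.Ioo (0 : ℝ) 1) (hq : 0 < q) :
    StochDom (berProb fun _ : E => min p (pPrime p q)) (fkProb ends α p q) ∧
    StochDom (fkProb ends α p q) (berProb fun _ : E => max p (pPrime p q)) := by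
  exact classical_comparison_inequalities_general ends α hp hq

end FKPaper
end
end

section
/- Compatibility (specification) property of FK measures. Let (V, E, ends, α) be a finite graph with boundary condition, p ∈ (0,1), q > 0. Let F ⊆ E and η : E∖F → Bool. Let α(η) denote the equivalence relation on V generated by α together with all pairs of endpoints of edges e' ∈ E∖F with η e' = true. Then for every σ : F → Bool, φ^α_{(V,E),p,q}({ω : ω|_F = σ and ω|_{E∖F} = η}) = φ^α_{(V,E),p,q}({ω : ω|_{E∖F} = η}) · φ^{α(η)}_{(V,F),p,q}({σ}), where φ^{α(η)}_{(V,F),p,q} is the FK measure of the graph with vertex type V, edge type F (with the restricted endpoint map) and wiring α(η). -/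
open scoped Classical

noncomputable section

namespace FKPaper

variable {V E : Type*}

/-- `α(η)`: the equivalence relation on `V` generated by `α` together with the pairs of
endpoints of the edges outside `F` that are open in `η`. -/
def wireSetoid (ends : E → Sym2 V) (α : Setoid V) (F : Set E) (η : E → Bool) : Setoid V :=
  Relation.EqvGen.setoid
    (fun x y => α.r x y ∨ ∃ e, e ∉ F ∧ η e = true ∧ ends e = s(x, y))

/-! Opening the edges outside `F` prescribed by `η` and then those inside `F` prescribed by `τ`
generates the same partition of `V` as wiring by `α(η)` first, since joins of equivalence relations
associate. Hence the number of components is unchanged, and the weight of the glued configuration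
is the weight of `τ` on the graph with edge set `F` times a Bernoulli factor depending only on `η`.
This factor cancels upon normalization. -/

section Setoid

variable {X Y : Type*}

theorem sym2_map_eq_mk_iff {f : X → Y} {z : Sym2 X} {a b : Y} :
    z.map f = s(a, b) ↔ ∃ x y, z = s(x, y) ∧ f x = a ∧ f y = b := by
  constructor
  · induction z using Sym2.ind with
    | _ x y =>
      rw [Sym2.map_mk, Sym2.eq_iff]
      rintro (⟨hx, hy⟩ | ⟨hx, hy⟩)
      · exact ⟨x, y, rfl, hx, hy⟩
      · exact ⟨y, x, Sym2.eq_swap, hy, hx⟩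
  · rintro ⟨x, y, rfl, rfl, rfl⟩
    rfl

theorem card_quotient_comap_of_surjective {f : X → Y} (hf : f.Surjective) (r : Setoid Y) :
    Nat.card (Quotient (r.comap f)) = Nat.card (Quotient r) := by
  have hsurj : (Quotient.mk'' ∘ f : X → Quotient r).Surjective := Quotient.mk''_surjective.comp hf
  rw [Nat.card_congr (Setoid.comapQuotientEquiv f r), hsurj.range_eq, Nat.card_univ]

end Setoid

section Components

/-- The partition of `V` into the connected components of the unwired multigraph with edge set
`S`. Wirings enter through the join `α ⊔ edgeSetoid ends S`, so that components can be compared on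
`V` itself instead of on different quotients of it. -/
def edgeSetoid (ends : E → Sym2 V) (S : Set E) : Setoid V :=
  Relation.EqvGen.setoid fun x y => ∃ e ∈ S, ends e = s(x, y)

theorem edgeSetoid_union (ends : E → Sym2 V) (S T : Set E) :
    edgeSetoid ends (S ∪ T) = edgeSetoid ends S ⊔ edgeSetoid ends T := by
  unfold edgeSetoid
  rw [← Setoid.gi.gc.l_sup]
  congr 1
  ext x y
  simp only [Set.mem_union, or_and_right, exists_or, Pi.sup_apply, sup_Prop_eq]

theorem edgeSetoid_image {E' : Type*} (ends : E → Sym2 V) (f : E' → E) (S : Set E') :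
    edgeSetoid ends (f '' S) = edgeSetoid (ends ∘ f) S := by
  simp only [edgeSetoid, Set.exists_mem_image, Function.comp_apply]

theorem wireSetoid_eq_sup (ends : E → Sym2 V) (α : Setoid V) (F : Set E) (η : E → Bool) :
    wireSetoid ends α F η = α ⊔ edgeSetoid ends {e | e ∉ F ∧ η e = true} := by
  refine le_antisymm (Setoid.eqvGen_le ?_) (sup_le ?_ (Setoid.eqvGen_le ?_))
  · rintro x y (hxy | ⟨e, heF, he, hxy⟩)
    · exact (le_sup_left : α ≤ _) hxy
    · exact (le_sup_right : edgeSetoid ends _ ≤ _) (.rel _ _ ⟨e, ⟨heF, he⟩, hxy⟩)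
  · exact fun x y hxy => .rel _ _ (.inl hxy)
  · rintro x y ⟨e, ⟨heF, he⟩, hxy⟩
    exact .rel _ _ (.inr ⟨e, heF, he, hxy⟩)

theorem comap_connSetoid (ends : E → Sym2 V) (α : Setoid V) (S : Set E) :
    (connSetoid ends α S).comap (Quotient.mk α) = α ⊔ edgeSetoid ends S := by
  apply le_antisymm
  · have hker : Setoid.ker (Quotient.mk α) ≤ α ⊔ edgeSetoid ends S :=
      (Setoid.ker_mk_eq α).le.trans le_sup_left
    have hconn : connSetoid ends α S ≤ (α ⊔ edgeSetoid ends S).map (Quotient.mk α) := by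
      refine Setoid.eqvGen_le ?_
      rintro _ _ ⟨e, he, hmap⟩
      obtain ⟨x, y, hxy, rfl, rfl⟩ := sym2_map_eq_mk_iff.1 hmap
      have hedge : edgeSetoid ends S x y := .rel _ _ ⟨e, he, hxy⟩
      exact Setoid.le_comap_map ((le_sup_right : edgeSetoid ends S ≤ _) hedge)
    rw [← Setoid.comap_map_of_ker_le _ _ hker]
    exact fun _ _ h => hconn h
  · refine sup_le ?_ (Setoid.eqvGen_le ?_)
    · intro x y hxy
      rw [Setoid.comap_rel, Quotient.sound hxy]
    · rintro x y ⟨e, he, hxy⟩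
      exact .rel _ _ ⟨e, he, sym2_map_eq_mk_iff.2 ⟨x, y, hxy, rfl, rfl⟩⟩

theorem numComponents_eq_card_sup (ends : E → Sym2 V) (α : Setoid V) (ω : E → Bool) :
    numComponents ends α ω = Nat.card (Quotient (α ⊔ edgeSetoid ends {e | ω e = true})) := by
  rw [← comap_connSetoid, card_quotient_comap_of_surjective Quotient.mk_surjective, numComponents]

end Components

section Extend

variable {β : Type*}

theorem extend_subtypeVal_of_notMem {F : Set E} (τ : F → β) (η : E → β) {e : E} (he : e ∉ F) :
    Subtype.val.extend τ η e = η e :=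
  Function.extend_apply' _ _ _ fun ⟨e', h⟩ => he (h ▸ e'.2)

theorem eq_extend_subtypeVal_iff {F : Set E} {τ : F → β} {η ω : E → β} :
    ω = Subtype.val.extend τ η ↔ (∀ e : F, ω e = τ e) ∧ ∀ e ∉ F, ω e = η e := by
  constructor
  · rintro rfl
    exact ⟨Subtype.val_injective.extend_apply τ η, fun _ => extend_subtypeVal_of_notMem τ η⟩
  · rintro ⟨hF, hFc⟩
    ext e
    by_cases he : e ∈ F
    · exact (hF ⟨e, he⟩).trans (Subtype.val_injective.extend_apply τ η ⟨e, he⟩).symm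
    · exact (hFc e he).trans (extend_subtypeVal_of_notMem τ η he).symm

theorem range_extend_subtypeVal (F : Set E) (η : E → β) :
    Set.range (fun τ : F → β => Subtype.val.extend τ η) = {ω | ∀ e ∉ F, ω e = η e} := by
  ext ω
  constructor
  · rintro ⟨τ, rfl⟩
    exact (eq_extend_subtypeVal_iff.1 rfl).2
  · exact fun hω => ⟨fun e => ω e, (eq_extend_subtypeVal_iff.2 ⟨fun _ => rfl, hω⟩).symm⟩

theorem setOf_extend_subtypeVal_eq_true (F : Set E) (η : E → Bool) (τ : F → Bool) :
    {e | Subtype.val.extend τ η e = true} =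
      {e | e ∉ F ∧ η e = true} ∪ Subtype.val '' {e : F | τ e = true} := by
  ext e
  by_cases he : e ∈ F
  · have hτ : Subtype.val.extend τ η e = τ ⟨e, he⟩ :=
      Subtype.val_injective.extend_apply τ η ⟨e, he⟩
    simp [he, hτ]
  · simp [he]

theorem numComponents_extend (ends : E → Sym2 V) (α : Setoid V) (F : Set E) (η : E → Bool)
    (τ : F → Bool) :
    numComponents ends α (Subtype.val.extend τ η) =
      numComponents (fun e : F => ends e) (wireSetoid ends α F η) τ := by
  rw [numComponents_eq_card_sup, numComponents_eq_card_sup, setOf_extend_subtypeVal_eq_true,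
    edgeSetoid_union, edgeSetoid_image, ← sup_assoc, ← wireSetoid_eq_sup]
  rfl

end Extend

section Weight

variable [Fintype E]

theorem fkWeight_eq_berWeight_mul (ends : E → Sym2 V) (α : Setoid V) (p q : ℝ) (ω : E → Bool) :
    fkWeight ends α p q ω = berWeight (fun _ => p) ω * q ^ numComponents ends α ω := by
  simp only [fkWeight, berWeight, Finset.prod_ite, Finset.prod_const, Bool.not_eq_true]

theorem berWeight_extend (pe : E → ℝ) (F : Set E) [Fintype F] (η : E → Bool) (τ : F → Bool) :
    berWeight pe (Subtype.val.extend τ η) =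
      berWeight (fun e : {e // e ∉ F} => pe e) (fun e => η e) *
        berWeight (fun e : F => pe e) τ := by
  have hF (e : F) : Subtype.val.extend τ η e = τ e := Subtype.val_injective.extend_apply τ η e
  have hFc (e : {e // e ∉ F}) : Subtype.val.extend τ η e = η e :=
    extend_subtypeVal_of_notMem τ η e.2
  simp only [berWeight, ← hF, ← hFc]
  rw [mul_comm, ← Fintype.prod_subtype_mul_prod_subtype (· ∈ F)]
  congr!

theorem fkWeight_extend (ends : E → Sym2 V) (α : Setoid V) (p q : ℝ) (F : Set E) [Fintype F]
    (η : E → Bool) (τ : F → Bool) :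
    fkWeight ends α p q (Subtype.val.extend τ η) =
      berWeight (fun _ : {e // e ∉ F} => p) (fun e => η e) *
        fkWeight (fun e : F => ends e) (wireSetoid ends α F η) p q τ := by
  rw [fkWeight_eq_berWeight_mul, fkWeight_eq_berWeight_mul, berWeight_extend,
    numComponents_extend, mul_assoc]

theorem massOf_fkWeight_univ_pos (ends : E → Sym2 V) (α : Setoid V) {p q : ℝ}
    (hp : p ∈ Set.Icc (0 : ℝ) 1) (hq : 0 < q) : 0 < massOf (fkWeight ends α p q) Set.univ := by
  have hp₀ : 0 ≤ p := hp.1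
  have hp₁ : 0 ≤ 1 - p := sub_nonneg.2 hp.2
  have hnonneg (ω : E → Bool) : 0 ≤ fkWeight ends α p q ω := by
    unfold fkWeight
    positivity
  have hexists : ∃ ω : E → Bool, 0 < fkWeight ends α p q ω := by
    rcases hp₀.eq_or_lt with rfl | hp₀
    · exact ⟨fun _ => false, by simp [fkWeight, hq]⟩
    · exact ⟨fun _ => true, by simp [fkWeight, hp₀, hq]⟩
  obtain ⟨ω, hω⟩ := hexists
  exact Finset.sum_pos' (fun ω _ => hnonneg ω) ⟨ω, by simp, hω⟩

end Weight

section Probability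

-- Unification, not instance search, must find these: `Fintype (F → Bool)` occurs with different
-- decidability instances.
variable {ι κ : Type*} {_ : Fintype ι} {_ : Fintype κ}

theorem massOf_image {g : κ → ι} (hg : g.Injective) (w : ι → ℝ) (A : Set κ) :
    massOf w (g '' A) = massOf (w ∘ g) A := by
  have himage : Finset.univ.filter (· ∈ g '' A) = (Finset.univ.filter (· ∈ A)).image g := by
    ext
    simp
  rw [massOf, himage, Finset.sum_image hg.injOn]
  rfl

theorem probOf_image {w : ι → ℝ} {v : κ → ℝ} {g : κ → ι} (hg : g.Injective) {c : ℝ}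
    (hw : ∀ k, w (g k) = c * v k) (hv : massOf v Set.univ ≠ 0) (A : Set κ) :
    probOf w (g '' A) = probOf w (Set.range g) * probOf v A := by
  have hmass (B : Set κ) : massOf w (g '' B) = c * massOf v B := by
    rw [massOf_image hg, massOf, massOf, Finset.mul_sum]
    exact Finset.sum_congr rfl fun k _ => hw k
  rw [← Set.image_univ, probOf, probOf, probOf, hmass, hmass]
  field_simp

end Probability

/-- Pitfall: `numComponents` takes the junk value `0` when there are infinitely many components. -/
theorem fk_compatibility_general
    {V E : Type*} [Fintype E]
    (ends : E → Sym2 V) (α : Setoid V) [Finite (Quotient α)]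
    (p q : ℝ) (hp : p ∈ Set.Icc (0 : ℝ) 1) (hq : 0 < q)
    (F : Set E) (η : E → Bool) (σ : F → Bool) :
    fkProb ends α p q {ω | (∀ e : F, ω e = σ e) ∧ ∀ e ∉ F, ω e = η e}
      = fkProb ends α p q {ω | ∀ e ∉ F, ω e = η e}
        * fkProb (fun e : F => ends e) (wireSetoid ends α F η) p q {σ} := by
  have hsingle : {ω | (∀ e : F, ω e = σ e) ∧ ∀ e ∉ F, ω e = η e} =
      (fun τ : F → Bool => Subtype.val.extend τ η) '' {σ} := by
    ext ω
    simp only [← eq_extend_subtypeVal_iff, Set.mem_ofPred_eq, Set.image_singleton,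
      Set.mem_singleton_iff]
  rw [hsingle, ← range_extend_subtypeVal]
  exact probOf_image (Function.extend_injective Subtype.val_injective η)
    (fkWeight_extend ends α p q F η) (massOf_fkWeight_univ_pos _ _ hp hq).ne' {σ}

/-- **Compatibility (specification) property of FK measures.** -/
theorem fk_compatibility
    {V E : Type*} [Fintype V] [Fintype E]
    (ends : E → Sym2 V) (α : Setoid V)
    (p q : ℝ) (hp : p ∈ Set.Ioo (0 : ℝ) 1) (hq : 0 < q)
    (F : Set E) (η : E → Bool) (σ : ↥F → Bool) :
    fkProb ends α p q
        {ω | (∀ e : ↥F, ω e.1 = σ e) ∧ ∀ e ∉ F, ω e = η e}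
      = fkProb ends α p q {ω | ∀ e ∉ F, ω e = η e}
        * fkProb (fun e : ↥F => ends e.1) (wireSetoid ends α F η) p q {σ} :=
  fk_compatibility_general ends α p q (Set.Ioo_subset_Icc_self hp) hq F η σ

end FKPaper
end
end
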